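/- Let v ∈ M_n(ℂ) be a unitary with v^k = 1. The following are equivalent: (i) there exists a unitary a ∈ M_n(ℂ) with v a v* = ζ a and a^k = 1; (ii) there exist finitely many normal matrices a₀,…,a_N ∈ M_n(ℂ) with v a_i v* = ζ a_i, σ(a_i) ⊆ ✲_k, and Σ_i a_i a_i* = 1; (iii) the eigenspaces E_j = ker(v − ζ^j·1), j ∈ {0,…,k−1}, all have the same dimension (necessarily n/k). -/

import Mathlib

/-- `ζ = exp(2πi/k)`. -/
noncomputable def ltZeta (k : ℕ) : ℂ := Complex.exp (2 * Real.pi * Complex.I / k)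

/-- The "asterisk" set `✲_k = {t·ζ^m : t ∈ [0,1], 0 ≤ m < k} ⊆ ℂ`. -/
noncomputable def ltAsterisk (k : ℕ) : Set ℂ :=
  {z | ∃ t ∈ Set.Icc (0 : ℝ) 1, ∃ m : ℕ, m < k ∧ z = (t : ℂ) * ltZeta k ^ m}


theorem ltZeta_prim (k : ℕ) (hk : 0 < k) : IsPrimitiveRoot (ltZeta k) k :=
  Complex.isPrimitiveRoot_exp k hk.ne'

section proj
variable {V : Type*} [AddCommGroup V] [Module ℂ V]

/-- averaging operator onto the `w`-eigenspace -/
noncomputable def ltProj (k : ℕ) (f : Module.End ℂ V) (w : ℂ) : Module.End ℂ V :=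
  (k : ℂ)⁻¹ • ∑ m ∈ Finset.range k, (w⁻¹ • f) ^ m

theorem ltProj_mem (k : ℕ) (f : Module.End ℂ V) (hf : f ^ k = 1) (w : ℂ) (hw : w ^ k = 1)
    (hw0 : w ≠ 0) (x : V) : ltProj k f w x ∈ Module.End.eigenspace f w := by
  rw [Module.End.mem_eigenspace_iff]
  have h := mul_geom_sum (w⁻¹ • f) k
  rw [smul_pow, hf, inv_pow, hw, inv_one, one_smul, sub_self, sub_mul, one_mul, sub_eq_zero] at h
  have h2 : f * ltProj k f w = w • ltProj k f w := by
    rw [ltProj, mul_smul_comm, smul_comm w]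
    congr 1
    conv_rhs => rw [← h, smul_mul_assoc, smul_smul, mul_inv_cancel₀ hw0, one_smul]
  exact LinearMap.congr_fun h2 x

theorem ltProj_id (k : ℕ) (hk : 0 < k) (f : Module.End ℂ V) (w : ℂ)
    (hw0 : w ≠ 0) (x : V) (hx : x ∈ Module.End.eigenspace f w) : ltProj k f w x = x := by
  rw [Module.End.mem_eigenspace_iff] at hx
  have h : ∀ m : ℕ, ((w⁻¹ • f) ^ m) x = x := by
    intro m
    induction m with
    | zero => simp
    | succ m ih => rw [pow_succ, Module.End.mul_apply, LinearMap.smul_apply, hx, smul_smul,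
        inv_mul_cancel₀ hw0, one_smul, ih]
  have hk' : (k : ℂ) ≠ 0 := by exact_mod_cast hk.ne'
  simp only [ltProj, LinearMap.smul_apply, LinearMap.sum_apply, h, Finset.sum_const,
    Finset.card_range]
  rw [← Nat.cast_smul_eq_nsmul ℂ, smul_smul, inv_mul_cancel₀ hk', one_smul]

theorem ltProj_sum (k : ℕ) (hk : 0 < k) (f : Module.End ℂ V) :
    ∑ j : Fin k, ltProj k f (ltZeta k ^ (j : ℕ)) = 1 := by
  have hk' : (k : ℂ) ≠ 0 := by exact_mod_cast hk.ne'
  have hp := (ltZeta_prim k hk)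
  rw [Fin.sum_univ_eq_sum_range (fun j => ltProj k f (ltZeta k ^ j))]
  simp only [ltProj, ← Finset.smul_sum, smul_pow]
  rw [Finset.sum_comm]
  simp only [← Finset.sum_smul]
  rw [Finset.sum_eq_single 0]
  · simp [smul_smul, hk']
  · intro m hm hm0
    have h1 : ∀ j : ℕ, ((ltZeta k ^ j)⁻¹) ^ m = ((ltZeta k ^ m)⁻¹) ^ j := by
      intro j; rw [inv_pow, inv_pow, ← pow_mul, ← pow_mul, mul_comm]
    simp only [h1]
    have h2 : (ltZeta k ^ m)⁻¹ ≠ 1 := by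
      rw [Ne, inv_eq_one]
      exact hp.pow_ne_one_of_pos_of_lt hm0 (Finset.mem_range.mp hm)
    have h3 := mul_geom_sum (ltZeta k ^ m)⁻¹ k
    rw [inv_pow, ← pow_mul, mul_comm m k, pow_mul, hp.pow_eq_one, one_pow, inv_one, sub_self,
      mul_eq_zero] at h3
    rw [h3.resolve_left (sub_ne_zero.mpr h2), zero_smul]
  · intro h; exact absurd (Finset.mem_range.mpr hk) h

theorem finrank_of_trace [FiniteDimensional ℂ V] (k : ℕ) (hk : 0 < k) (f : Module.End ℂ V)
    (hf : f ^ k = 1) (w : ℂ) (hw : w ^ k = 1) (hw0 : w ≠ 0)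
    (ht : ∀ m, 0 < m → m < k → LinearMap.trace ℂ V (f ^ m) = 0) :
    (Module.finrank ℂ (Module.End.eigenspace f w) : ℂ) = (k : ℂ)⁻¹ * Module.finrank ℂ V := by
  have h : LinearMap.IsProj (Module.End.eigenspace f w) (ltProj k f w) :=
    ⟨ltProj_mem k f hf w hw hw0, ltProj_id k hk f w hw0⟩
  rw [← h.trace, ltProj, map_smul, map_sum, Finset.sum_eq_single 0]
  · simp
  · intro m hm hm0
    rw [smul_pow, map_smul, ht m (Nat.pos_of_ne_zero hm0) (Finset.mem_range.mp hm), smul_zero]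
  · intro h; exact absurd (Finset.mem_range.mpr hk) h

end proj

theorem two_to_three (n k : ℕ) (hk : 0 < k) (v : Matrix (Fin n) (Fin n) ℂ)
    (hv : v ∈ unitary (Matrix (Fin n) (Fin n) ℂ)) (hvk : v ^ k = 1)
    (N : ℕ) (a : Fin (N + 1) → Matrix (Fin n) (Fin n) ℂ)
    (hn : ∀ i, IsStarNormal (a i)) (hva : ∀ i, v * a i * star v = ltZeta k • a i)
    (hs : (∑ i, a i * star (a i)) = 1) (j j' : Fin k) :
        Module.finrank ℂ
          ↥(Module.End.eigenspace (Matrix.toLin' v) (ltZeta k ^ (j : ℕ))) =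
        Module.finrank ℂ
          ↥(Module.End.eigenspace (Matrix.toLin' v) (ltZeta k ^ (j' : ℕ))) := by
  have hp := ltZeta_prim k hk
  have hz : ltZeta k ≠ 0 := hp.ne_zero hk.ne'
  have ht : ∀ m, 0 < m → m < k → LinearMap.trace ℂ _ (Matrix.toLin' v ^ m) = 0 := by
    intro m hm0 hm
    have hc : ∀ i, ∀ m : ℕ, v ^ m * a i = ltZeta k ^ m • (a i * v ^ m) := by
      intro i m
      have h1 : v * a i = ltZeta k • (a i * v) := by
        rw [← smul_mul_assoc, ← hva i, mul_assoc, (Unitary.mem_iff.mp hv).1, mul_one]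
      induction m with
      | zero => simp
      | succ m ih =>
        rw [pow_succ, mul_assoc, h1, mul_smul_comm, ← mul_assoc, ih, smul_mul_assoc, smul_smul,
          mul_assoc, ← pow_succ', pow_succ]
    have h0 : ∀ i, Matrix.trace (v ^ m * (a i * star (a i))) = 0 := by
      intro i
      have h2 : Matrix.trace (v ^ m * (a i * star (a i)))
          = ltZeta k ^ m * Matrix.trace (v ^ m * (a i * star (a i))) := by
        conv_lhs => rw [← mul_assoc, hc, smul_mul_assoc, Matrix.trace_smul, mul_assoc,
          Matrix.trace_mul_comm, mul_assoc, (hn i).star_comm_self.eq, smul_eq_mul]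
      have h3 := hp.pow_ne_one_of_pos_of_lt hm0.ne' hm
      have h4 : (1 - ltZeta k ^ m) * Matrix.trace (v ^ m * (a i * star (a i))) = 0 := by
        rw [sub_mul, one_mul, ← h2, sub_self]
      exact (mul_eq_zero.mp h4).resolve_left (sub_ne_zero.mpr (Ne.symm h3))
    rw [← Matrix.toLin'_pow, Matrix.trace_toLin'_eq]
    rw [← mul_one (v ^ m), ← hs, Finset.mul_sum, Matrix.trace_sum]
    exact Finset.sum_eq_zero fun i _ => h0 i
  have key : ∀ j : ℕ, _ := fun j => finrank_of_trace k hk (Matrix.toLin' v)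
    (by rw [← Matrix.toLin'_pow, hvk, Matrix.toLin'_one]; rfl) (ltZeta k ^ j)
    (by rw [← pow_mul, mul_comm, pow_mul, hp.pow_eq_one, one_pow]) (pow_ne_zero _ hz) ht
  exact_mod_cast (key j).trans (key j').symm

theorem one_to_two (n k : ℕ) (hk : 0 < k) (v a : Matrix (Fin n) (Fin n) ℂ)
    (ha : a ∈ unitary (Matrix (Fin n) (Fin n) ℂ)) 
    (hva : v * a * star v = ltZeta k • a) (hak : a ^ k = 1) : 
    ∃ N : ℕ, ∃ a : Fin (N + 1) → Matrix (Fin n) (Fin n) ℂ,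
        (∀ i, IsStarNormal (a i)) ∧
        (∀ i, v * a i * star v = ltZeta k • a i) ∧
        (∀ i, spectrum ℂ (a i) ⊆ ltAsterisk k) ∧
        (∑ i, a i * star (a i)) = 1 := by
  have hu := Unitary.mem_iff.mp ha
  refine ⟨0, fun _ => a, fun _ => ⟨?_⟩, fun _ => hva, fun _ z hz => ?_, ?_⟩
  · exact hu.1.trans hu.2.symm
  · have : Nonempty (Fin n) := by
      by_contra h
      rw [not_nonempty_iff] at h
      exact (spectrum.mem_iff.mp hz) (isUnit_of_subsingleton _)
    have h1 : z ^ k ∈ spectrum ℂ (a ^ k) := spectrum.pow_mem_pow a k hz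
    rw [hak, spectrum.one_eq] at h1
    obtain ⟨i, hi, rfl⟩ :=
      haveI : NeZero k := ⟨hk.ne'⟩
      (ltZeta_prim k hk).eq_pow_of_pow_eq_one (Set.mem_singleton_iff.mp h1)
    exact ⟨1, by simp, i, hi, by simp⟩
  · simpa using hu.2

theorem three_to_one (n k : ℕ) (hk : 0 < k) (v : Matrix (Fin n) (Fin n) ℂ)
    (hv : v ∈ unitary (Matrix (Fin n) (Fin n) ℂ)) (hvk : v ^ k = 1)
    (h : ∀ j j' : Fin k,
        Module.finrank ℂ
          ↥(Module.End.eigenspace (Matrix.toLin' v) (ltZeta k ^ (j : ℕ))) =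
        Module.finrank ℂ
          ↥(Module.End.eigenspace (Matrix.toLin' v) (ltZeta k ^ (j' : ℕ)))) :
    ∃ a : Matrix (Fin n) (Fin n) ℂ, a ∈ unitary (Matrix (Fin n) (Fin n) ℂ) ∧
        v * a * star v = ltZeta k • a ∧ a ^ k = 1 := by
  have hp := ltZeta_prim k hk
  have hz : ltZeta k ≠ 0 := hp.ne_zero hk.ne'
  haveI : NeZero k := ⟨hk.ne'⟩
  let Φ := Matrix.toEuclideanCLM (n := Fin n) (𝕜 := ℂ)
  let T := Φ v
  have hT : T ∈ unitary _ := Unitary.map_mem Φ hv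
  have hTk : T ^ k = 1 := by rw [← map_pow, hvk, map_one]
  let f : Module.End ℂ (EuclideanSpace ℂ (Fin n)) := T.toLinearMap
  have hfk : f ^ k = 1 := by
    rw [← ContinuousLinearMap.toLinearMap_pow, hTk]; rfl
  let F : Fin k → Submodule ℂ (EuclideanSpace ℂ (Fin n)) :=
    fun j => Module.End.eigenspace f (ltZeta k ^ (j : ℕ))
  have hrank : ∀ j, Module.finrank ℂ (F j) = Module.finrank ℂ
      ↥(Module.End.eigenspace (Matrix.toLin' v) (ltZeta k ^ (j : ℕ))) := by
    intro j
    let e := WithLp.linearEquiv 2 ℂ (Fin n → ℂ)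
    have : Submodule.map (e : EuclideanSpace ℂ (Fin n) →ₗ[ℂ] (Fin n → ℂ)) (F j) =
        Module.End.eigenspace (Matrix.toLin' v) (ltZeta k ^ (j : ℕ)) := by
      ext x
      rw [Submodule.mem_map_equiv, Module.End.mem_eigenspace_iff, Module.End.mem_eigenspace_iff]
      constructor
      · intro h
        exact congrArg e h
      · intro h
        exact e.injective h
    rw [← this]
    exact (e.submoduleMap (F j)).finrank_eq
  have hroot : ∀ j : ℕ, (ltZeta k ^ j) ^ k = 1 := fun j => by
    rw [← pow_mul, mul_comm, pow_mul, hp.pow_eq_one, one_pow]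
  have hinner : ∀ x y, inner ℂ (T x) (T y) = inner ℂ x y := by
    intro x y
    exact (Unitary.linearIsometryEquiv ⟨T, hT⟩).inner_map_map x y
  have horth : OrthogonalFamily ℂ (fun j => F j) fun j => (F j).subtypeₗᵢ := by
    intro i j hij x y
    have hx : T x = _ := Module.End.mem_eigenspace_iff.mp x.2
    have hy : T y = _ := Module.End.mem_eigenspace_iff.mp y.2
    have h1 := hinner x y
    rw [hx, hy, inner_smul_left, inner_smul_right] at h1
    change inner ℂ (x : EuclideanSpace ℂ (Fin n)) y = 0
    have hn : (starRingEnd ℂ) (ltZeta k ^ (i : ℕ)) * ltZeta k ^ (i : ℕ) = 1 := by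
      rw [mul_comm, Complex.mul_conj, Complex.normSq_eq_norm_sq,
        Complex.norm_eq_one_of_pow_eq_one (hroot i) hk.ne']
      simp
    by_contra hne
    rw [← mul_assoc] at h1
    have h2 := mul_right_cancel₀ hne (h1.trans (one_mul _).symm)
    have h3 : ltZeta k ^ (i : ℕ) = ltZeta k ^ (j : ℕ) := by
      rw [← hn] at h2
      exact (mul_left_cancel₀ (left_ne_zero_of_mul (hn ▸ one_ne_zero)) h2).symm
    exact hij (Fin.ext (hp.pow_inj i.2 j.2 h3))
  have hint : DirectSum.IsInternal F := by
    rw [horth.isInternal_iff]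
    have : iSup F = ⊤ := by
      rw [eq_top_iff]
      intro x _
      have hx := LinearMap.congr_fun (ltProj_sum k hk f) x
      rw [LinearMap.sum_apply] at hx
      change _ = x at hx
      rw [← hx]
      exact Submodule.sum_mem _ fun j _ => Submodule.mem_iSup_of_mem j
        (ltProj_mem k f hfk _ (hroot j) (pow_ne_zero _ hz) x)
    rw [this, Submodule.top_orthogonal_eq_bot]
  let d := Module.finrank ℂ (F 0)
  have hd : ∀ j, Module.finrank ℂ (F j) = d := fun j => by
    change _ = Module.finrank ℂ (F 0)
    rw [hrank, hrank]; exact h _ _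
  let bs : ∀ j, OrthonormalBasis (Fin d) ℂ (F j) := fun j =>
    (stdOrthonormalBasis ℂ (F j)).reindex (finCongr (hd j))
  let b := hint.collectedOrthonormalBasis horth bs
  have hTb : ∀ p, T (b p) = ltZeta k ^ (p.1 : ℕ) • b p := by
    intro p
    exact Module.End.mem_eigenspace_iff.mp (hint.collectedOrthonormalBasis_mem horth bs p)
  let s : (Σ _ : Fin k, Fin d) ≃ (Σ _ : Fin k, Fin d) :=
    { toFun := fun p => ⟨p.1 + 1, p.2⟩
      invFun := fun p => ⟨p.1 - 1, p.2⟩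
      left_inv := fun p => by simp
      right_inv := fun p => by simp }
  have hs : ∀ p, s p = ⟨p.1 + 1, p.2⟩ := fun p => rfl
  let A := b.equiv b s
  have hA : ∀ p, A (b p) = b ⟨p.1 + 1, p.2⟩ := fun p => by
    rw [← hs]; exact b.equiv_apply_basis b s p
  let U : unitary (EuclideanSpace ℂ (Fin n) →L[ℂ] EuclideanSpace ℂ (Fin n)) :=
    Unitary.linearIsometryEquiv.symm A
  have hU : ∀ p, U.1 (b p) = b ⟨p.1 + 1, p.2⟩ := hA
  have hext : ∀ X Y : EuclideanSpace ℂ (Fin n) →L[ℂ] EuclideanSpace ℂ (Fin n),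
      (∀ p, X (b p) = Y (b p)) → X = Y := by
    intro X Y h
    apply ContinuousLinearMap.coe_injective
    exact b.toBasis.ext (fun p => by simpa using h p)
  have hUk : U.1 ^ k = 1 := by
    have h1 : ∀ m : ℕ, ∀ p, (U.1 ^ m) (b p) = b ⟨p.1 + m • (1 : Fin k), p.2⟩ := by
      intro m
      induction m with
      | zero => intro p; simp
      | succ m ih =>
        intro p
        rw [pow_succ', mul_apply_eq_comp, ih, hU]
        simp [add_assoc, succ_nsmul]
    apply hext
    intro p
    have h2 : k • (1 : Fin k) = 0 := by
      have h3 := card_nsmul_eq_zero (G := Fin k) (x := 1)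
      rwa [Fintype.card_fin] at h3
    rw [h1, h2]
    simp
  have hTU : T * U.1 = ltZeta k • (U.1 * T) := by
    apply hext
    intro p
    rw [smul_apply, mul_apply_eq_comp,
      mul_apply_eq_comp, hTb, map_smul, hU, hTb, smul_smul, ← pow_succ']
    congr 1
    simp only [Fin.val_add]
    rw [← pow_mod_orderOf (ltZeta k) (_ + 1), ← hp.eq_orderOf]
    simp
  refine ⟨Φ.symm U.1, Unitary.map_mem Φ.symm U.2, ?_, ?_⟩
  · apply EquivLike.injective Φ
    rw [map_mul, map_mul, map_smul, map_star, StarAlgEquiv.apply_symm_apply]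
    change T * U.1 * star T = _
    rw [hTU, smul_mul_assoc, mul_assoc, (Unitary.mem_iff.mp hT).2, mul_one]
  · rw [← map_pow, hUk, map_one]

theorem stmt6 (n k : ℕ) (hk : 0 < k) (v : Matrix (Fin n) (Fin n) ℂ)
    (hv : v ∈ unitary (Matrix (Fin n) (Fin n) ℂ)) (hvk : v ^ k = 1) :
    ((∃ a : Matrix (Fin n) (Fin n) ℂ, a ∈ unitary (Matrix (Fin n) (Fin n) ℂ) ∧
        v * a * star v = ltZeta k • a ∧ a ^ k = 1) ↔
      (∀ j j' : Fin k,
        Module.finrank ℂ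
          ↥(Module.End.eigenspace (Matrix.toLin' v) (ltZeta k ^ (j : ℕ))) =
        Module.finrank ℂ
          ↥(Module.End.eigenspace (Matrix.toLin' v) (ltZeta k ^ (j' : ℕ))))) ∧
    ((∃ N : ℕ, ∃ a : Fin (N + 1) → Matrix (Fin n) (Fin n) ℂ,
        (∀ i, IsStarNormal (a i)) ∧
        (∀ i, v * a i * star v = ltZeta k • a i) ∧
        (∀ i, spectrum ℂ (a i) ⊆ ltAsterisk k) ∧
        (∑ i, a i * star (a i)) = 1) ↔
      (∀ j j' : Fin k,
        Module.finrank ℂ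
          ↥(Module.End.eigenspace (Matrix.toLin' v) (ltZeta k ^ (j : ℕ))) =
        Module.finrank ℂ
          ↥(Module.End.eigenspace (Matrix.toLin' v) (ltZeta k ^ (j' : ℕ))))) := by
  refine ⟨⟨fun h => ?_, three_to_one n k hk v hv hvk⟩,
    ⟨fun ⟨N, a, h1, h2, _, h4⟩ => two_to_three n k hk v hv hvk N a h1 h2 h4, fun h =>
      ?_⟩⟩
  rotate_left
  · obtain ⟨a, ha, hva, hak⟩ := three_to_one n k hk v hv hvk h
    exact one_to_two n k hk v a ha hva hak
  obtain ⟨a, ha, hva, hak⟩ := h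
  obtain ⟨N, a, h1, h2, _, h4⟩ := one_to_two n k hk v a ha hva hak
  exact two_to_three n k hk v hv hvk N a h1 h2 h4
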